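/- arXiv:2601.22668 — 6 statements merged into one kernel-verified Lean document; each statement's English description precedes it below -/
import Mathlib

section
/- Let γ be a C-contracting geodesic in X (for some C ≥ 0). Then the nearest-point projection to γ is (1,4C)-coarsely Lipschitz: for all x, y ∈ X, diam(π_γ(x) ∪ π_γ(y)) ≤ d(x,y) + 4C. -/
/-!
Write `A = f '' s` and take a geodesic `g` from `x` to `y`. If `g` stays at distance at least `C` from `A`,
both projections lie in the projection of `g`, which has diameter at most `C`. Otherwise let
`p` and `q` be the first and last points of `g` at distance at most `C` from `A`. The initial part
of `g`, up to `p`, stays `C`-far from `A` (unless `p = x`), so `π_A(x)` is within `C` of `π_A(p)`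
and hence within `2C` of `p`; symmetrically `π_A(y)` is within `2C` of `q`
(`exists_near_proj_start`). Since `p` and `q` lie on `g`, `d(p, q) ≤ d(x, y)`, and the triangle
inequality gives `d(x, y) + 4C`.
-/

open Metric Set

/-- The nearest-point projection of a point `x` to a subset `A`. -/
def nearestProj {X : Type*} [MetricSpace X] (A : Set X) (x : X) : Set X :=
  {a ∈ A | dist x a = Metric.infDist x A}

/-- `f` restricted to `s ⊆ ℝ` is a unit-speed geodesic. -/
def IsGeodesicOn {X : Type*} [MetricSpace X] (f : ℝ → X) (s : Set ℝ) : Prop :=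
  ∀ u ∈ s, ∀ v ∈ s, dist (f u) (f v) = |u - v|

/-- `S` is (the image of) a geodesic segment from `x` to `y`. -/
def IsGeodSegment {X : Type*} [MetricSpace X] (S : Set X) (x y : X) : Prop :=
  ∃ (f : ℝ → X) (L : ℝ), 0 ≤ L ∧ IsGeodesicOn f (Set.Icc 0 L) ∧
    f 0 = x ∧ f L = y ∧ S = f '' Set.Icc 0 L

/-- `X` is a geodesic metric space: any two points are joined by a geodesic segment. -/
def GeodesicSpace (X : Type*) [MetricSpace X] : Prop :=
  ∀ x y : X, ∃ S : Set X, IsGeodSegment S x y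

/-- `A` is a `C`-contracting subset: any geodesic segment at distance at least `C`
from `A` has nearest-point projection to `A` of diameter at most `C`. -/
def Contracting {X : Type*} [MetricSpace X] (C : ℝ) (A : Set X) : Prop :=
  ∀ (S : Set X) (x y : X), IsGeodSegment S x y →
    (∀ p ∈ S, C ≤ Metric.infDist p A) →
    Metric.diam {a : X | ∃ p ∈ S, a ∈ nearestProj A p} ≤ C

/-- The point `w` is `K`-aligned with the geodesic `S` relative to the marked
endpoint `e` of `S`: the diameter of `π_S(w) ∪ {e}` is less than `K`.
For a segment `S` from `x` to `y`, the pair `(w, S)` being `K`-aligned is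
`AlignedIn K w S x`, and the pair `(S, z)` being `K`-aligned is `AlignedIn K z S y`. -/
def AlignedIn {X : Type*} [MetricSpace X] (K : ℝ) (w : X) (S : Set X) (e : X) : Prop :=
  Metric.diam (nearestProj S w ∪ {e}) < K

/-- The shadow `O_R(x,y)`: points `w` such that some geodesic segment from `x` to `w`
meets the open ball of radius `R` about `y`. -/
def Shadow {X : Type*} [MetricSpace X] (R : ℝ) (x y : X) : Set X :=
  {w | ∃ S : Set X, IsGeodSegment S x w ∧ ∃ p ∈ S, dist p y < R}

/-- The Gromov product `(z|w)_x`. -/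
noncomputable def gromovProd {X : Type*} [MetricSpace X] (x z w : X) : ℝ :=
  (dist x z + dist x w - dist z w) / 2

/-- `X` has `δ`-thin geodesic triangles. -/
def ThinTriangles (X : Type*) [MetricSpace X] (δ : ℝ) : Prop :=
  ∀ (x y z : X) (S₁ S₂ S₃ : Set X),
    IsGeodSegment S₁ x y → IsGeodSegment S₂ y z → IsGeodSegment S₃ x z →
    ∀ p ∈ S₃, Metric.infDist p (S₁ ∪ S₂) ≤ δ

section Helpers

variable {X : Type*} [MetricSpace X]

/-- On a stretch of geodesic that stays `C`-far from a `C`-contracting set, any two projections are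
`C`-close. The projection of the stretch has to be shown bounded, since `Metric.diam` takes the
value `0` on unbounded sets. -/
lemma dist_proj_le_of_far {A : Set X} {C : ℝ} (hA : Contracting C A) {g : ℝ → X} {T : ℝ}
    (hT : 0 ≤ T) (hg : IsGeodesicOn g (Set.Icc 0 T))
    (hfar : ∀ t ∈ Set.Icc 0 T, C ≤ Metric.infDist (g t) A)
    {u v : ℝ} (hu : u ∈ Set.Icc 0 T) (hv : v ∈ Set.Icc 0 T) {a b : X}
    (ha : a ∈ nearestProj A (g u)) (hb : b ∈ nearestProj A (g v)) : dist a b ≤ C := by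
  have hdiam := hA (g '' Set.Icc 0 T) (g 0) (g T) ⟨g, T, hT, hg, rfl, rfl, rfl⟩
    (by rintro _ ⟨t, ht, rfl⟩; exact hfar t ht)
  have ha' : a ∈ {a : X | ∃ p ∈ g '' Set.Icc 0 T, a ∈ nearestProj A p} := ⟨_, ⟨u, hu, rfl⟩, ha⟩
  have hb' : b ∈ {a : X | ∃ p ∈ g '' Set.Icc 0 T, a ∈ nearestProj A p} := ⟨_, ⟨v, hv, rfl⟩, hb⟩
  refine le_trans (Metric.dist_le_diam_of_mem ?_ ha' hb') hdiam
  refine (Metric.isBounded_closedBall (x := g 0) (r := Metric.infDist (g 0) A + 2 * T)).subset ?_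
  rintro c ⟨_, ⟨t, ht, rfl⟩, hc⟩
  have h1 : dist (g t) (g 0) = t := by
    rw [hg t ht 0 ⟨le_rfl, hT⟩, sub_zero, abs_of_nonneg ht.1]
  have h2 : Metric.infDist (g t) A ≤ Metric.infDist (g 0) A + dist (g t) (g 0) :=
    Metric.infDist_le_infDist_add_dist
  have h3 := dist_triangle c (g t) (g 0)
  rw [dist_comm c (g t), hc.2] at h3
  rw [Metric.mem_closedBall]
  linarith [ht.2]

/-- If a geodesic comes `C`-close to a closed `C`-contracting set, then the projection of its
starting point lies within `2C` of some point of the geodesic, namely the first `C`-close one. -/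
lemma exists_near_proj_start [ProperSpace X] {A : Set X} {C : ℝ} (hC : 0 ≤ C) (hcl : IsClosed A)
    (hne : A.Nonempty) (hA : Contracting C A) {g : ℝ → X} {L : ℝ}
    (hg : IsGeodesicOn g (Set.Icc 0 L))
    (hclose : ∃ t ∈ Set.Icc 0 L, Metric.infDist (g t) A ≤ C) :
    ∃ t ∈ Set.Icc 0 L, ∀ a ∈ nearestProj A (g 0), dist a (g t) ≤ 2 * C := by
  have hcont : ContinuousOn g (Set.Icc 0 L) := by
    refine LipschitzOnWith.continuousOn (K := 1) (LipschitzOnWith.of_dist_le_mul ?_)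
    intro u hu v hv
    rw [hg u hu v hv, Real.dist_eq, NNReal.coe_one, one_mul]
  have hK : IsCompact (Set.Icc 0 L ∩ (fun t => Metric.infDist (g t) A) ⁻¹' Set.Iic C) := by
    refine isCompact_Icc.of_isClosed_subset ?_ Set.inter_subset_left
    exact ((Metric.continuous_infDist_pt A).comp_continuousOn hcont).preimage_isClosed_of_isClosed
      isClosed_Icc isClosed_Iic
  obtain ⟨T, ⟨hT, hTC⟩, hmin⟩ := hK.exists_isLeast hclose
  simp only [Set.mem_preimage, Set.mem_Iic] at hTC
  have hbefore : ∀ t, 0 ≤ t → t < T → C < Metric.infDist (g t) A := by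
    intro t h0 ht
    by_contra! h
    exact absurd (hmin ⟨⟨h0, ht.le.trans hT.2⟩, h⟩) (not_le.2 ht)
  refine ⟨T, hT, fun a ha => ?_⟩
  rcases hT.1.eq_or_lt with h0 | hpos
  · rw [← h0] at hTC ⊢
    rw [dist_comm, ha.2]
    linarith
  · have hsub : Set.Icc 0 T ⊆ Set.Icc 0 L := Set.Icc_subset_Icc_right hT.2
    have hTfar : C ≤ Metric.infDist (g T) A := by
      refine le_of_forall_pos_le_add fun ε hε => ?_
      -- Compare with a slightly earlier point, using that `infDist` is `1`-Lipschitz.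
      have hu0 : 0 ≤ max 0 (T - ε) := le_max_left _ _
      have huT : max 0 (T - ε) < T := max_lt hpos (by linarith)
      have h1 := hbefore _ hu0 huT
      have h2 : Metric.infDist (g (max 0 (T - ε))) A
          ≤ Metric.infDist (g T) A + dist (g (max 0 (T - ε))) (g T) :=
        Metric.infDist_le_infDist_add_dist
      rw [hg _ (hsub ⟨hu0, huT.le⟩) T hT, abs_of_nonpos (by linarith)] at h2
      linarith [le_max_right 0 (T - ε)]
    have hfar : ∀ t ∈ Set.Icc 0 T, C ≤ Metric.infDist (g t) A := by
      intro t ht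
      rcases ht.2.eq_or_lt with rfl | hlt
      · exact hTfar
      · exact (hbefore t ht.1 hlt).le
    obtain ⟨b, hbA, hb⟩ := hcl.exists_infDist_eq_dist hne (g T)
    have hab : dist a b ≤ C :=
      dist_proj_le_of_far hA hT.1 (fun u hu v hv => hg u (hsub hu) v (hsub hv)) hfar
        ⟨le_rfl, hT.1⟩ ⟨hT.1, le_rfl⟩ ha ⟨hbA, hb.symm⟩
    have := dist_triangle_right a (g T) b
    linarith

end Helpers

/-- the nearest-point projection to a `C`-contracting geodesic is
`(1, 4C)`-coarsely Lipschitz. -/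
theorem stmt0 {X : Type*} [MetricSpace X] [ProperSpace X]
    (hX : GeodesicSpace X)
    (C : ℝ) (hC : 0 ≤ C)
    (f : ℝ → X) (s : Set ℝ) (hf : IsGeodesicOn f s)
    (hclosed : IsClosed (f '' s))
    (hcontr : Contracting C (f '' s)) (x y : X) :
    Metric.diam (nearestProj (f '' s) x ∪ nearestProj (f '' s) y) ≤ dist x y + 4 * C := by
  generalize f '' s = A at *
  obtain ⟨_, g, L, hL, hg, rfl, rfl, -⟩ := hX x y
  have h0 : (0 : ℝ) ∈ Set.Icc 0 L := ⟨le_rfl, hL⟩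
  have h1 : L ∈ Set.Icc 0 L := ⟨hL, le_rfl⟩
  have hxy : dist (g 0) (g L) = L := by
    rw [hg 0 h0 L h1, zero_sub, abs_neg, abs_of_nonneg hL]
  rw [hxy]
  refine Metric.diam_le_of_forall_dist_le (by linarith) ?_
  intro a ha b hb
  by_cases hclose : ∃ t ∈ Set.Icc 0 L, Metric.infDist (g t) A ≤ C
  · have hne : A.Nonempty := ha.elim (fun h => ⟨a, h.1⟩) (fun h => ⟨a, h.1⟩)
    obtain ⟨p, hp, hpx⟩ := exists_near_proj_start hC hclosed hne hcontr hg hclose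
    -- The last `C`-close point is the first one on the reversed geodesic.
    have hrev : IsGeodesicOn (fun t => g (L - t)) (Set.Icc 0 L) := by
      intro u hu v hv
      rw [hg (L - u) ⟨by linarith [hu.2], by linarith [hu.1]⟩
        (L - v) ⟨by linarith [hv.2], by linarith [hv.1]⟩, abs_sub_comm u v]
      congr 1
      ring
    obtain ⟨q, hq, hqy⟩ := exists_near_proj_start hC hclosed hne hcontr hrev (by
      obtain ⟨t, ht, htC⟩ := hclose
      exact ⟨L - t, ⟨by linarith [ht.2], by linarith [ht.1]⟩, by simpa using htC⟩)
    simp only [sub_zero] at hqy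
    have hmem : ∀ c ∈ nearestProj A (g 0) ∪ nearestProj A (g L),
        ∃ r ∈ Set.Icc 0 L, dist c (g r) ≤ 2 * C := by
      rintro c (hc | hc)
      · exact ⟨p, hp, hpx c hc⟩
      · exact ⟨L - q, ⟨by linarith [hq.2], by linarith [hq.1]⟩, hqy c hc⟩
    obtain ⟨r, hr, har⟩ := hmem a ha
    obtain ⟨r', hr', hbr⟩ := hmem b hb
    have hrr : dist (g r) (g r') ≤ L := by
      rw [hg r hr r' hr', abs_le]
      constructor <;> linarith [hr.1, hr.2, hr'.1, hr'.2]
    have := dist_triangle4 a (g r) (g r') b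
    rw [dist_comm b] at hbr
    linarith
  · push Not at hclose
    have hmem : ∀ c ∈ nearestProj A (g 0) ∪ nearestProj A (g L),
        ∃ r ∈ Set.Icc 0 L, c ∈ nearestProj A (g r) := by
      rintro c (hc | hc)
      · exact ⟨0, h0, hc⟩
      · exact ⟨L, h1, hc⟩
    obtain ⟨r, hr, har⟩ := hmem a ha
    obtain ⟨r', hr', hbr⟩ := hmem b hb
    have := dist_proj_le_of_far hcontr hL hg (fun t ht => (hclose t ht).le) hr hr' har hbr
    linarith
end

section
/- Let γ : I → X be a unit-speed C-contracting geodesic (segment, ray, or line) with closed image, let x ∈ X, and let t ∈ I be such that γ(t) ∈ π_γ(x). Then for every s ∈ I one has |d(x, γ(s)) − (d(x, γ(t)) + |t − s|)| ≤ 4C. -/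
/-!
The upper bound on `dist x (f s)` is the triangle inequality. For the lower bound, put `A = f '' I`.
If `x` is within `C` of `A`, the triangle inequality again suffices. Otherwise follow a geodesic
from `x` to `f s` up to the first point `p` with `infDist p A = C` (`exists_first_hit`). The initial
piece stays at distance at least `C` from `A`, so contraction puts any projection `q` of `p` within
`C` of `f t`. Since `dist x p ≥ dist x (f t) - C` and `dist p (f s) ≥ |t - s| - 2 * C`, adding
gives the bound, even with `3 * C` in place of `4 * C`.
-/

open Metric Set

lemma IsGeodesicOn.continuousOn {X : Type*} [MetricSpace X] {g : ℝ → X} {s : Set ℝ}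
    (hg : IsGeodesicOn g s) : ContinuousOn g s := by
  have h : LipschitzOnWith 1 g s := LipschitzOnWith.of_dist_le_mul fun u hu v hv => by
    simp [hg u hu v hv, Real.dist_eq]
  exact h.continuousOn

/-- A continuous function on `[0, L]` going from at least `C` to at most `C` has a first time at
which it equals `C`, and it is at least `C` up to that time. -/
lemma exists_first_hit {h : ℝ → ℝ} {L C : ℝ} (hL : 0 ≤ L) (hh : ContinuousOn h (Icc 0 L))
    (h0 : C ≤ h 0) (h1 : h L ≤ C) :
    ∃ u ∈ Icc 0 L, h u = C ∧ ∀ v ∈ Icc 0 u, C ≤ h v := by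
  have hcomp : IsCompact (Icc 0 L ∩ h ⁻¹' {C}) :=
    isCompact_Icc.of_isClosed_subset
      (hh.preimage_isClosed_of_isClosed isClosed_Icc isClosed_singleton) inter_subset_left
  obtain ⟨w, hw, hwC⟩ := intermediate_value_Icc' hL hh ⟨h1, h0⟩
  obtain ⟨u, ⟨hu, huC⟩, hmin⟩ := hcomp.exists_isLeast ⟨w, hw, hwC⟩
  refine ⟨u, hu, huC, fun v hv => ?_⟩
  by_contra! hlt
  have hvL : v ≤ L := hv.2.trans hu.2
  -- A value below `C` before time `u` would force an earlier time with value `C`.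
  obtain ⟨z, hz, hzC⟩ := intermediate_value_Icc' hv.1
    (hh.mono (Icc_subset_Icc_right hvL)) ⟨hlt.le, h0⟩
  have huz : u ≤ z := hmin ⟨⟨hz.1, hz.2.trans hvL⟩, hzC⟩
  have hvu : v = u := le_antisymm hv.2 (huz.trans hz.2)
  subst hvu
  exact hlt.ne huC

/-- The projection of a bounded set is bounded, so its diameter is not a junk value. -/
lemma isBounded_proj {X : Type*} [MetricSpace X] {A S : Set X} {b : X} (hb : b ∈ A)
    (hS : Bornology.IsBounded S) :
    Bornology.IsBounded {a : X | ∃ p ∈ S, a ∈ nearestProj A p} := by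
  obtain ⟨r, hr⟩ := hS.subset_closedBall b
  refine (isBounded_closedBall (x := b) (r := 2 * r)).subset ?_
  rintro a ⟨p, hp, -, hpa⟩
  have h1 : dist p b ≤ r := hr hp
  have h2 : infDist p A ≤ dist p b := infDist_le_dist_of_mem hb
  have h3 := dist_triangle_left a b p
  rw [mem_closedBall]
  linarith

/-- distance estimate along a `C`-contracting geodesic via
nearest-point projection. -/
theorem stmt1 {X : Type*} [MetricSpace X] [ProperSpace X]
    (hX : GeodesicSpace X)
    (C : ℝ) (hC : 0 ≤ C)
    (f : ℝ → X) (I : Set ℝ) (hf : IsGeodesicOn f I)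
    (hclosed : IsClosed (f '' I))
    (hcontr : Contracting C (f '' I))
    (x : X) (t : ℝ) (ht : t ∈ I)
    (hproj : f t ∈ nearestProj (f '' I) x) :
    ∀ s ∈ I, |dist x (f s) - (dist x (f t) + |t - s|)| ≤ 4 * C := by
  intro s hs
  have hts : dist (f t) (f s) = |t - s| := hf t ht s hs
  have htA : f t ∈ f '' I := mem_image_of_mem f ht
  have hsA : f s ∈ f '' I := mem_image_of_mem f hs
  have hxt : dist x (f t) = infDist x (f '' I) := hproj.2
  rw [← hts, abs_le]
  refine ⟨?_, by linarith [dist_triangle x (f t) (f s)]⟩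
  rcases lt_or_ge (infDist x (f '' I)) C with hlt | hge
  · linarith [dist_triangle_left (f t) (f s) x]
  obtain ⟨_, g, L, hL, hg, hg0, hgL, -⟩ := hX x (f s)
  have hcont : ContinuousOn (fun u => infDist (g u) (f '' I)) (Icc 0 L) :=
    (continuous_infDist_pt _).comp_continuousOn hg.continuousOn
  obtain ⟨u, hu, huC, hbefore⟩ := exists_first_hit hL hcont (by simpa [hg0] using hge)
    (by simpa [hgL, infDist_zero_of_mem hsA] using hC)
  obtain ⟨q, hqA, hq⟩ := hclosed.exists_infDist_eq_dist ⟨_, htA⟩ (g u)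
  have hsub : Icc 0 u ⊆ Icc 0 L := Icc_subset_Icc_right hu.2
  have hgu : IsGeodesicOn g (Icc 0 u) := fun a ha b hb => hg a (hsub ha) b (hsub hb)
  have hdiam := hcontr (g '' Icc 0 u) x (g u) ⟨g, u, hu.1, hgu, hg0, rfl, rfl⟩
    (forall_mem_image.2 hbefore)
  have hbdd := isBounded_proj htA (isCompact_Icc.image_of_continuousOn hgu.continuousOn).isBounded
  have htq : dist (f t) q ≤ C :=
    (dist_le_diam_of_mem hbdd ⟨x, ⟨0, ⟨le_rfl, hu.1⟩, hg0⟩, hproj⟩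
      ⟨g u, ⟨u, ⟨hu.1, le_rfl⟩, rfl⟩, hqA, hq.symm⟩).trans hdiam
  have hxs : dist x (f s) = dist x (g u) + dist (g u) (f s) := by
    have h0 : (0 : ℝ) ∈ Icc 0 L := ⟨le_rfl, hL⟩
    have hL' : L ∈ Icc 0 L := ⟨hL, le_rfl⟩
    rw [← hg0, ← hgL, hg 0 h0 L hL', hg 0 h0 u hu, hg u hu L hL', abs_sub_comm 0 L,
      abs_sub_comm 0 u, abs_sub_comm u L, abs_of_nonneg (by linarith),
      abs_of_nonneg (by linarith [hu.1]), abs_of_nonneg (by linarith [hu.2])]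
    ring
  have hxp : infDist x (f '' I) ≤ infDist (g u) (f '' I) + dist x (g u) :=
    infDist_le_infDist_add_dist
  have hps := dist_triangle4 (f t) q (g u) (f s)
  rw [dist_comm q] at hps
  linarith
end

section
/- Let R > 0, let x, y, z, w ∈ X, and fix a geodesic segment [y,z] from y to z which is C-contracting for some C > 0. If w ∈ O_R(x,y) ∩ O_R(y,z), then the triple (x, [y,z], w) is (2R + 4C)-aligned. -/
/-!
The argument rests on one property of a `C`-contracting compact set `A`
(`Contracting.project_or_enter`). Follow a geodesic from `u` through a point `p`, and let
`a ∈ π_A(u)`. Either the part from `u` to `p` stays at distance at least `C` from `A`, so that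
`a` is `C`-close to a projection of `p`; or that part enters the `C`-neighbourhood of `A` at a
first point `q`, and then `q` is `2C`-close to `a`.

For `w`: the geodesic from `w` to `y` passes through `p` with `d(p, z) < R`. In the first case
`d(a, z) ≤ C + 2R`, because projections of `p` are `2R`-close to `z`. In the second case
`d(y, z) < R + d(p, y) ≤ R + d(q, y) ≤ R + 2C + d(a, y)`, that is `d(a, z) < R + 2C`.

For `x`: the geodesic from `x` to `w` passes through `p` with `d(p, y) < R`. The first case is as
before. In the second case the geodesic runs from `q` (near `a`) back to `y` and then on to `w`,
while the second shadow condition says that `[y, w]` passes near `z`; comparing with the path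
`q, a, z, w` gives `2 d(a, y) ≤ 4R + 4C`.

Finally, two points of `[y, z]` that lie within `M` of the same endpoint are within `M` of each
other, so these bounds control the diameters as well.
-/

open Metric Set

namespace IsGeodSegment

variable {X : Type*} [MetricSpace X] {S : Set X} {x y : X}

theorem symm (h : IsGeodSegment S x y) : IsGeodSegment S y x := by
  obtain ⟨f, L, hL, hf, rfl, rfl, rfl⟩ := h
  refine ⟨fun t => f (L - t), L, hL, ?_, by simp, by simp, ?_⟩
  · intro u hu v hv
    rw [hf (L - u) ⟨by linarith [hu.2], by linarith [hu.1]⟩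
      (L - v) ⟨by linarith [hv.2], by linarith [hv.1]⟩]
    rw [abs_sub_comm]
    congr 1
    ring
  · ext a
    constructor
    · rintro ⟨t, ht, rfl⟩
      exact ⟨L - t, ⟨by linarith [ht.2], by linarith [ht.1]⟩, by simp⟩
    · rintro ⟨t, ht, rfl⟩
      exact ⟨L - t, ⟨by linarith [ht.2], by linarith [ht.1]⟩, rfl⟩

theorem left_mem (h : IsGeodSegment S x y) : x ∈ S := by
  obtain ⟨f, L, hL, hf, rfl, rfl, rfl⟩ := h
  exact ⟨0, ⟨le_rfl, hL⟩, rfl⟩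

theorem right_mem (h : IsGeodSegment S x y) : y ∈ S := h.symm.left_mem

theorem isCompact (h : IsGeodSegment S x y) : IsCompact S := by
  obtain ⟨f, L, hL, hf, rfl, rfl, rfl⟩ := h
  refine isCompact_Icc.image_of_continuousOn (LipschitzOnWith.continuousOn (K := 1) ?_)
  refine LipschitzOnWith.of_dist_le_mul fun u hu v hv => ?_
  rw [hf u hu v hv, Real.dist_eq]
  simp

theorem dist_add_dist (h : IsGeodSegment S x y) {a : X} (ha : a ∈ S) :
    dist x a + dist a y = dist x y := by
  obtain ⟨f, L, hL, hf, rfl, rfl, rfl⟩ := h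
  obtain ⟨t, ht, rfl⟩ := ha
  rw [hf 0 ⟨le_rfl, hL⟩ t ht, hf t ht L ⟨hL, le_rfl⟩, hf 0 ⟨le_rfl, hL⟩ L ⟨hL, le_rfl⟩,
    abs_of_nonpos (by linarith [ht.1]), abs_of_nonpos (by linarith [ht.2]),
    abs_of_nonpos (by linarith)]
  ring

theorem dist_le_max (h : IsGeodSegment S x y) {a b : X} (ha : a ∈ S) (hb : b ∈ S) :
    dist a b ≤ max (dist a x) (dist b x) := by
  obtain ⟨f, L, hL, hf, rfl, rfl, rfl⟩ := h
  obtain ⟨s, hs, rfl⟩ := ha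
  obtain ⟨t, ht, rfl⟩ := hb
  rw [hf s hs t ht, hf s hs 0 ⟨le_rfl, hL⟩, hf t ht 0 ⟨le_rfl, hL⟩, sub_zero, sub_zero,
    abs_of_nonneg hs.1, abs_of_nonneg ht.1]
  rcases le_total s t with hst | hst
  · exact le_max_of_le_right (by rw [abs_of_nonpos (by linarith)]; linarith [hs.1])
  · exact le_max_of_le_left (by rw [abs_of_nonneg (by linarith)]; linarith [ht.1])

/-- Alignment relative to an endpoint only requires bounding the distance from each projection
point to that endpoint. -/
theorem alignedIn (h : IsGeodSegment S x y) {K M : ℝ} {w : X} (hM : 0 ≤ M) (hMK : M < K)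
    (hw : ∀ a ∈ nearestProj S w, dist a x ≤ M) : AlignedIn K w S x := by
  refine (Metric.diam_le_of_forall_dist_le hM ?_).trans_lt hMK
  have key : ∀ a ∈ nearestProj S w ∪ {x}, a ∈ S ∧ dist a x ≤ M := by
    rintro a (ha | rfl)
    · exact ⟨ha.1, hw a ha⟩
    · exact ⟨h.left_mem, by simpa using hM⟩
  intro a ha b hb
  exact (h.dist_le_max (key a ha).1 (key b hb).1).trans (max_le (key a ha).2 (key b hb).2)

end IsGeodSegment

theorem nearestProj_nonempty {X : Type*} [MetricSpace X] {A : Set X} (hA : IsCompact A)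
    (hne : A.Nonempty) (p : X) : (nearestProj A p).Nonempty := by
  obtain ⟨b, hb, h⟩ := hA.exists_infDist_eq_dist hne p
  exact ⟨b, hb, h.symm⟩

theorem dist_le_of_mem_nearestProj {X : Type*} [MetricSpace X] {A : Set X} {p b e : X}
    (hb : b ∈ nearestProj A p) (he : e ∈ A) : dist b e ≤ 2 * dist p e := by
  have h1 : dist p b ≤ dist p e := hb.2.trans_le (Metric.infDist_le_dist_of_mem he)
  linarith [dist_triangle_left b e p]

/-- Along a geodesic from `u` through `p`, either a projection `a` of `u` is `C`-close to a
projection of `p`, or the geodesic passes `2C`-close to `a` at some point `q` before `p`. -/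
theorem Contracting.project_or_enter {X : Type*} [MetricSpace X] {A : Set X} {C : ℝ}
    (hC : 0 < C) (hcontr : Contracting C A) (hA : IsCompact A) (hne : A.Nonempty)
    {γ : Set X} {u v p a : X} (hγ : IsGeodSegment γ u v) (hp : p ∈ γ)
    (ha : a ∈ nearestProj A u) :
    (∃ b ∈ nearestProj A p, dist a b ≤ C) ∨
      ∃ q, dist q a ≤ 2 * C ∧ dist q p + dist p v = dist q v := by
  obtain ⟨f, L, hL, hf, rfl, rfl, rfl⟩ := hγ
  obtain ⟨T, hT, rfl⟩ := hp
  have hcont : ContinuousOn (fun t => Metric.infDist (f t) A) (Set.Icc 0 L) := by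
    refine (Metric.continuous_infDist_pt A).comp_continuousOn
      (LipschitzOnWith.continuousOn (K := 1) (LipschitzOnWith.of_dist_le_mul fun s hs t ht => ?_))
    rw [hf s hs t ht, Real.dist_eq]
    simp
  -- A subsegment staying at distance at least `C` moves projections by at most `C`.
  have hfar : ∀ s ∈ Set.Icc 0 L, (∀ t ∈ Set.Icc 0 s, C ≤ Metric.infDist (f t) A) →
      ∀ b ∈ nearestProj A (f s), dist a b ≤ C := by
    intro s hs hfs b hb
    refine le_trans (Metric.dist_le_diam_of_mem ?_ ?_ ?_)
      (hcontr (f '' Set.Icc 0 s) (f 0) (f s)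
        ⟨f, s, hs.1, fun i hi j hj => hf i ⟨hi.1, hi.2.trans hs.2⟩ j ⟨hj.1, hj.2.trans hs.2⟩,
          rfl, rfl, rfl⟩ ?_)
    · exact hA.isBounded.subset fun c ⟨_, _, hc⟩ => hc.1
    · exact ⟨f 0, ⟨0, ⟨le_rfl, hs.1⟩, rfl⟩, ha⟩
    · exact ⟨f s, ⟨s, ⟨hs.1, le_rfl⟩, rfl⟩, hb⟩
    · rintro _ ⟨t, ht, rfl⟩
      exact hfs t ht
  by_cases hall : ∀ t ∈ Set.Icc 0 T, C ≤ Metric.infDist (f t) A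
  · obtain ⟨b, hb⟩ := nearestProj_nonempty hA hne (f T)
    exact Or.inl ⟨b, hb, hfar T hT hall b hb⟩
  right
  suffices h : ∃ s ∈ Set.Icc 0 T, dist (f s) a ≤ 2 * C by
    obtain ⟨s, hs, hsa⟩ := h
    refine ⟨f s, hsa, ?_⟩
    have hs' : s ∈ Set.Icc 0 L := ⟨hs.1, hs.2.trans hT.2⟩
    rw [hf s hs' T hT, hf T hT L ⟨hL, le_rfl⟩, hf s hs' L ⟨hL, le_rfl⟩,
      abs_of_nonpos (by linarith [hs.2]), abs_of_nonpos (by linarith [hT.2]),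
      abs_of_nonpos (by linarith [hs'.2])]
    ring
  rcases le_total (Metric.infDist (f 0) A) C with h0 | h0
  · exact ⟨0, ⟨le_rfl, hT.1⟩, by rw [ha.2]; linarith⟩
  push Not at hall
  obtain ⟨r, hr, hrC⟩ := hall
  have hcontT := hcont.mono (Set.Icc_subset_Icc_right hT.2)
  -- `s` is the first time at distance exactly `C` from `A`.
  have hcomp : IsCompact (Set.Icc 0 T ∩ (fun t => Metric.infDist (f t) A) ⁻¹' {C}) :=
    isCompact_Icc.of_isClosed_subset
      (hcontT.preimage_isClosed_of_isClosed isClosed_Icc isClosed_singleton)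
      Set.inter_subset_left
  have hivt : ∀ t ∈ Set.Icc 0 T, Metric.infDist (f t) A ≤ C →
      ∃ s ∈ Set.Icc 0 t, Metric.infDist (f s) A = C := fun t ht htC =>
    intermediate_value_Icc' ht.1 (hcontT.mono (Set.Icc_subset_Icc_right ht.2)) ⟨htC, h0⟩
  obtain ⟨s₀, hs₀, hs₀C⟩ := hivt r hr hrC.le
  obtain ⟨s, ⟨hs, hsC⟩, hmin⟩ := hcomp.exists_isLeast ⟨s₀, ⟨hs₀.1, hs₀.2.trans hr.2⟩, hs₀C⟩
  refine ⟨s, hs, ?_⟩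
  obtain ⟨b, hb⟩ := nearestProj_nonempty hA hne (f s)
  have hab : dist a b ≤ C := by
    refine hfar s ⟨hs.1, hs.2.trans hT.2⟩ (fun t ht => ?_) b hb
    by_contra! hlt
    obtain ⟨t', ht', ht'C⟩ := hivt t ⟨ht.1, ht.2.trans hs.2⟩ hlt.le
    have hst' : s ≤ t' := hmin ⟨⟨ht'.1, ht'.2.trans (ht.2.trans hs.2)⟩, ht'C⟩
    have : t = t' := le_antisymm (ht.2.trans hst') ht'.2
    rw [this] at hlt
    exact hlt.ne ht'C
  have hsb : dist (f s) b = C := hb.2.trans hsC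
  linarith [dist_triangle_right (f s) a b]

/-- membership in two consecutive shadows implies alignment. -/
theorem stmt3 {X : Type*} [MetricSpace X] [ProperSpace X]
    (hX : GeodesicSpace X)
    (R : ℝ) (hR : 0 < R) (x y z w : X)
    (S : Set X) (hS : IsGeodSegment S y z)
    (C : ℝ) (hC : 0 < C) (hcontr : Contracting C S)
    (hw : w ∈ Shadow R x y ∩ Shadow R y z) :
    AlignedIn (2 * R + 4 * C) x S y ∧ AlignedIn (2 * R + 4 * C) w S z := by
  obtain ⟨⟨α, hα, p, hp, hpy⟩, ⟨β, hβ, p', hp', hpz⟩⟩ := hw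
  have hne : S.Nonempty := ⟨y, hS.left_mem⟩
  have hβd := hβ.dist_add_dist hp'
  constructor
  · refine hS.alignedIn (M := 2 * R + 2 * C) (by positivity) (by linarith) fun a ha => ?_
    rcases hcontr.project_or_enter hC hS.isCompact hne hα hp ha with ⟨b, hb, hab⟩ | ⟨q, hqa, hq⟩
    · linarith [dist_triangle a b y, dist_le_of_mem_nearestProj hb hS.left_mem]
    · have hSa := hS.dist_add_dist ha.1
      rw [dist_comm y a] at hSa
      have h1 : dist a y ≤ dist q a + dist q p + dist p y := by
        linarith [dist_triangle_left a y q, dist_triangle q p y]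
      have h2 : dist y w ≤ dist p y + dist p w := dist_triangle_left y w p
      have h3 : dist y z ≤ dist y p' + dist p' z := dist_triangle y p' z
      have h4 : dist z w ≤ dist p' z + dist p' w := dist_triangle_left z w p'
      have h5 : dist q w ≤ dist q a + (dist a z + dist z w) := by
        linarith [dist_triangle q a w, dist_triangle a z w]
      linarith
  · refine hS.symm.alignedIn (M := 2 * R + 2 * C) (by positivity) (by linarith) fun a ha => ?_
    rcases hcontr.project_or_enter hC hS.isCompact hne hβ.symm hp' ha with
      ⟨b, hb, hab⟩ | ⟨q, hqa, hq⟩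
    · linarith [dist_triangle a b z, dist_le_of_mem_nearestProj hb hS.right_mem]
    · have hSa := hS.dist_add_dist ha.1
      have h1 : dist y z ≤ dist p' y + dist p' z := dist_triangle_left y z p'
      have h2 : dist q y ≤ dist q a + dist y a := by
        simpa [dist_comm y a] using dist_triangle q a y
      linarith [dist_nonneg (x := q) (y := p')]
end

section
/- There exists C > 0, depending only on δ, c, and d(x₀, γ(0)), such that for every k ∈ ℕ, every x ∈ X, and every geodesic segment [x₀, g^k x₀] from x₀ to g^k x₀, the following hold: (i) for every K ≥ C, if the pair (x, [x₀, g^k x₀]) is not K-aligned, then every t ∈ ℝ with γ(t) ∈ π_{γ(ℝ)}(x) satisfies t ≥ K − C; (ii) for every K with 0 ≤ K ≤ τk − C, if the pair (x, [x₀, g^k x₀]) is K-aligned, then every t ∈ ℝ with γ(t) ∈ π_{γ(ℝ)}(x) satisfies t ≤ K + C. -/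
/-!
In a `δ`-hyperbolic space, if `p` is nearest to `x` on a geodesic, then `d(x, q)` equals
`d(x, p) + d(p, q)` up to `9 * δ` for every `q` on that geodesic (`dist_nearest_add_le`).
The segment `S = [x₀, g ^ k x₀]` has endpoints within `r + c` of `γ 0` and `γ (τ k)`, so it
fellow-travels `γ` on `[0, τ k]`, with parameters agreeing up to a constant (`exists_fellow`).

Let `p` be a nearest point to `x` on `S`, close to `γ b`, let `γ t` be nearest on the axis, and
let `t'` lie in `[0, τ k]` between `t` and `b`. Seen from `x`, going to `γ b` means passing near
`γ t'`, whereas going to the point of `S` near `γ t'` means passing near `p`, hence near `γ b`.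
Both can hold only if `|t' - b|` is bounded (`nearest_params_close`). Non-alignment gives a `p`
with `b` at least `K` up to a constant, and `t' = max t 0` then yields (i); alignment gives
`b ≤ K` up to a constant, and `t' = min t (τ k)` yields (ii). The conditions `K ≥ C` and
`K ≤ τ k - C` ensure that the truncation has no effect.
-/

open Metric Set

/-- Every subsegment of a geodesic is a geodesic segment, in either direction. -/
lemma IsGeodesicOn.segment {X : Type*} [MetricSpace X] {f : ℝ → X} {s : Set ℝ}
    (hf : IsGeodesicOn f s) (hs : s.OrdConnected) {a b : ℝ} (ha : a ∈ s) (hb : b ∈ s) :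
    IsGeodSegment (f '' Set.uIcc a b) (f a) (f b) := by
  have hsub : Set.uIcc a b ⊆ s := hs.uIcc_subset ha hb
  rcases le_total a b with h | h
  · rw [Set.uIcc_of_le h] at *
    refine ⟨fun u => f (a + u), b - a, by linarith, ?_, by simp, by simp, ?_⟩
    · intro u hu v hv
      have := hf (a + u) (hsub ⟨by linarith [hu.1], by linarith [hu.2]⟩)
        (a + v) (hsub ⟨by linarith [hv.1], by linarith [hv.2]⟩)
      simpa using this
    · ext p
      constructor
      · rintro ⟨u, hu, rfl⟩
        exact ⟨u - a, ⟨by linarith [hu.1], by linarith [hu.2]⟩, by simp⟩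
      · rintro ⟨u, hu, rfl⟩
        exact ⟨a + u, ⟨by linarith [hu.1], by linarith [hu.2]⟩, rfl⟩
  · rw [Set.uIcc_of_ge h] at *
    refine ⟨fun u => f (a - u), a - b, by linarith, ?_, by simp, by simp, ?_⟩
    · intro u hu v hv
      have := hf (a - u) (hsub ⟨by linarith [hu.2], by linarith [hu.1]⟩)
        (a - v) (hsub ⟨by linarith [hv.2], by linarith [hv.1]⟩)
      rw [this, abs_sub_comm u v]
      congr 1
      ring
    · ext p
      constructor
      · rintro ⟨u, hu, rfl⟩
        exact ⟨a - u, ⟨by linarith [hu.2], by linarith [hu.1]⟩, by simp⟩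
      · rintro ⟨u, hu, rfl⟩
        exact ⟨a - u, ⟨by linarith [hu.2], by linarith [hu.1]⟩, rfl⟩

lemma IsGeodSegment.nonempty {X : Type*} [MetricSpace X] {S : Set X} {x y : X}
    (h : IsGeodSegment S x y) : S.Nonempty := by
  obtain ⟨f, L, hL, -, -, -, rfl⟩ := h
  exact ⟨f 0, 0, ⟨le_rfl, hL⟩, rfl⟩

lemma IsGeodSegment.dist_add {X : Type*} [MetricSpace X] {S : Set X} {x y p : X}
    (h : IsGeodSegment S x y) (hp : p ∈ S) : dist x p + dist p y = dist x y := by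
  obtain ⟨f, L, hL, hf, rfl, rfl, rfl⟩ := h
  obtain ⟨u, hu, rfl⟩ := hp
  rw [hf 0 ⟨le_rfl, hL⟩ u hu, hf u hu L ⟨hL, le_rfl⟩, hf 0 ⟨le_rfl, hL⟩ L ⟨hL, le_rfl⟩]
  rw [abs_of_nonpos (by linarith [hu.1]), abs_of_nonpos (by linarith [hu.2]),
    abs_of_nonpos (by linarith)]
  ring

/-- Thinness with witnesses; relaxing `δ` to `2 * δ` avoids having to attain the distance. -/
lemma ThinTriangles.exists_near {X : Type*} [MetricSpace X] {δ : ℝ} (hδ : 0 < δ)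
    (hT : ThinTriangles X δ) {x y z : X} {S₁ S₂ S₃ : Set X} (h₁ : IsGeodSegment S₁ x y)
    (h₂ : IsGeodSegment S₂ y z) (h₃ : IsGeodSegment S₃ x z) {p : X} (hp : p ∈ S₃) :
    (∃ q ∈ S₁, dist p q < 2 * δ) ∨ (∃ q ∈ S₂, dist p q < 2 * δ) := by
  have h := hT x y z S₁ S₂ S₃ h₁ h₂ h₃ p hp
  have h' : Metric.infDist p (S₁ ∪ S₂) < 2 * δ := by linarith
  rw [Metric.infDist_lt_iff (h₁.nonempty.mono Set.subset_union_left)] at h'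
  obtain ⟨q, hq | hq, hd⟩ := h'
  · exact Or.inl ⟨q, hq, hd⟩
  · exact Or.inr ⟨q, hq, hd⟩

/-- Up to an error of `9 * δ`, a geodesic from `x` to a point `f b` of a geodesic passes through
the nearest point `f a`. The point `m` of `[f a, f b]` at distance `5 * δ` from `f a` cannot be
close to `[f a, x]`, since it would then be closer to `x` than `f a` is; by thinness it is close
to `[x, f b]`. -/
lemma dist_nearest_add_le {X : Type*} [MetricSpace X] {δ : ℝ} (hδ : 0 < δ)
    (hG : GeodesicSpace X) (hT : ThinTriangles X δ) {f : ℝ → X} {s : Set ℝ}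
    (hf : IsGeodesicOn f s) (hs : s.OrdConnected) {x : X} {a b : ℝ} (ha : a ∈ s) (hb : b ∈ s)
    (hmin : ∀ u ∈ s, dist x (f a) ≤ dist x (f u)) :
    dist x (f a) + |a - b| - 9 * δ ≤ dist x (f b) := by
  by_cases hab : |a - b| < 5 * δ
  · linarith [hmin b hb]
  push Not at hab
  obtain ⟨m, hm, ham, hmb⟩ : ∃ m ∈ Set.uIcc a b, |a - m| = 5 * δ ∧ |m - b| = |a - b| - 5 * δ := by
    rcases le_total a b with h | h
    · have e : |a - b| = b - a := by rw [abs_of_nonpos (by linarith)]; ring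
      rw [e] at hab ⊢
      refine ⟨a + 5 * δ, ?_, ?_, ?_⟩
      · rw [Set.uIcc_of_le h]; constructor <;> linarith
      · rw [abs_of_nonpos (by linarith)]; ring
      · rw [abs_of_nonpos (by linarith)]; ring
    · have e : |a - b| = a - b := abs_of_nonneg (by linarith)
      rw [e] at hab ⊢
      refine ⟨a - 5 * δ, ?_, ?_, ?_⟩
      · rw [Set.uIcc_of_ge h]; constructor <;> linarith
      · rw [abs_of_nonneg (by linarith)]; ring
      · rw [abs_of_nonneg (by linarith)]; ring
  have hms : m ∈ s := hs.uIcc_subset ha hb hm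
  have d₁ : dist (f a) (f m) = 5 * δ := by rw [hf a ha m hms, ham]
  have d₂ : dist (f m) (f b) = |a - b| - 5 * δ := by rw [hf m hms b hb, hmb]
  obtain ⟨S₁, h₁⟩ := hG (f a) x
  obtain ⟨S₂, h₂⟩ := hG x (f b)
  rcases hT.exists_near hδ h₁ h₂ (hf.segment hs ha hb) (Set.mem_image_of_mem f hm) with
    ⟨q, hq, hd⟩ | ⟨q, hq, hd⟩
  · have e := h₁.dist_add hq
    have t₁ := dist_triangle (f a) q (f m)
    have t₂ := dist_triangle x q (f m)
    rw [dist_comm q (f m)] at t₁ t₂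
    rw [dist_comm q x, dist_comm (f a) x] at e
    linarith [hmin m hms]
  · have e := h₂.dist_add hq
    have t₁ := dist_triangle (f m) q (f b)
    have t₂ := dist_triangle x q (f m)
    rw [dist_comm q (f m)] at t₂
    linarith [hmin m hms]

/-- Geodesics with `R`-close endpoints fellow-travel, with nearly equal parameters: a quadrilateral
is cut into two thin triangles. -/
lemma exists_fellow {X : Type*} [MetricSpace X] {δ : ℝ} (hδ : 0 < δ)
    (hG : GeodesicSpace X) (hT : ThinTriangles X δ) {f h : ℝ → X} {L L' R : ℝ}
    (hL : 0 ≤ L) (hL' : 0 ≤ L') (hf : IsGeodesicOn f (Set.Icc 0 L))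
    (hh : IsGeodesicOn h (Set.Icc 0 L')) (h0 : dist (f 0) (h 0) ≤ R)
    (h1 : dist (f L) (h L') ≤ R) {a : ℝ} (ha : a ∈ Set.Icc 0 L) :
    ∃ b ∈ Set.Icc 0 L', dist (f a) (h b) ≤ 4 * δ + R ∧ |a - b| ≤ 4 * δ + 2 * R := by
  have i0 : (0 : ℝ) ∈ Set.Icc 0 L := ⟨le_rfl, hL⟩
  have iL : L ∈ Set.Icc 0 L := ⟨hL, le_rfl⟩
  have j0 : (0 : ℝ) ∈ Set.Icc 0 L' := ⟨le_rfl, hL'⟩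
  have jL : L' ∈ Set.Icc 0 L' := ⟨hL', le_rfl⟩
  have hR : 0 ≤ R := dist_nonneg.trans h0
  suffices H : ∃ b ∈ Set.Icc 0 L', dist (f a) (h b) ≤ 4 * δ + R by
    obtain ⟨b, hb, hd⟩ := H
    refine ⟨b, hb, hd, ?_⟩
    have e₁ : dist (f 0) (f a) = a := by
      rw [hf 0 i0 a ha, abs_of_nonpos (by linarith [ha.1])]; ring
    have e₂ : dist (h 0) (h b) = b := by
      rw [hh 0 j0 b hb, abs_of_nonpos (by linarith [hb.1])]; ring
    have t₁ := dist_triangle4 (f 0) (h 0) (h b) (f a)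
    have t₂ := dist_triangle4 (h 0) (f 0) (f a) (h b)
    rw [dist_comm (h b) (f a)] at t₁
    rw [dist_comm (h 0) (f 0)] at t₂
    rw [abs_le]
    constructor <;> linarith
  have sf := hf.segment Set.ordConnected_Icc i0 iL
  have sh := hh.segment Set.ordConnected_Icc j0 jL
  rw [Set.uIcc_of_le hL] at sf
  rw [Set.uIcc_of_le hL'] at sh
  obtain ⟨S₁, g₁⟩ := hG (f 0) (h L')
  obtain ⟨S₂, g₂⟩ := hG (h L') (f L)
  obtain ⟨S₃, g₃⟩ := hG (f 0) (h 0)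
  rcases hT.exists_near hδ g₁ g₂ sf (Set.mem_image_of_mem f ha) with ⟨q, hq, hd⟩ | ⟨q, hq, hd⟩
  · rcases hT.exists_near hδ g₃ sh g₁ hq with ⟨p, hp, hd'⟩ | ⟨_, ⟨b, hb, rfl⟩, hd'⟩
    · refine ⟨0, j0, ?_⟩
      have e := g₃.dist_add hp
      have t := dist_triangle4 (f a) q p (h 0)
      linarith [dist_nonneg (x := f 0) (y := p)]
    · refine ⟨b, hb, ?_⟩
      linarith [dist_triangle (f a) q (h b)]
  · refine ⟨L', jL, ?_⟩
    have e := g₂.dist_add hq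
    have t := dist_triangle (f a) q (h L')
    rw [dist_comm q (h L')] at t
    rw [dist_comm (h L') (f L)] at e
    linarith [dist_nonneg (x := q) (y := f L)]

lemma nearestProj_le {X : Type*} [MetricSpace X] {A : Set X} {x p q : X}
    (hp : p ∈ nearestProj A x) (hq : q ∈ A) : dist x p ≤ dist x q := by
  rw [hp.2]
  exact Metric.infDist_le_dist_of_mem hq

/-- Let `f a` and `h t` be nearest to `x` on two geodesics, `f a` close to `h b`, and let `t'`
lie between `t` and `b` with `h t'` close to `f a'`. Going from `x` to `h b` then passes near
`h t'`, while going to `f a'` passes near `f a`; adding the two estimates bounds `|t' - b|`. -/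
lemma nearest_params_close {X : Type*} [MetricSpace X] {δ D E : ℝ} (hδ : 0 < δ)
    (hG : GeodesicSpace X) (hT : ThinTriangles X δ) {f h : ℝ → X} {s s' : Set ℝ}
    (hf : IsGeodesicOn f s) (hs : s.OrdConnected) (hh : IsGeodesicOn h s')
    (hs' : s'.OrdConnected) {x : X} {a a' b t t' : ℝ} (ha : a ∈ s) (ha' : a' ∈ s)
    (hb : b ∈ s') (ht : t ∈ s') (ht' : t' ∈ s')
    (hmin : ∀ u ∈ s, dist x (f a) ≤ dist x (f u))
    (hmin' : ∀ u ∈ s', dist x (h t) ≤ dist x (h u))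
    (hbetween : |t - b| = |t - t'| + |t' - b|)
    (hab : dist (f a) (h b) ≤ D) (hab' : dist (f a') (h t') ≤ D)
    (eab : |a - b| ≤ E) (eab' : |a' - t'| ≤ E) :
    |t' - b| ≤ D + E + 9 * δ := by
  have p₁ := dist_nearest_add_le hδ hG hT hf hs ha ha' hmin
  have p₂ := dist_nearest_add_le hδ hG hT hh hs' ht hb hmin'
  have t₁ := dist_triangle x (h t) (h t')
  rw [hh t ht t' ht'] at t₁
  have t₂ := dist_triangle x (f a) (h b)
  have t₃ := dist_triangle x (h t') (f a')
  rw [dist_comm (h t') (f a')] at t₃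
  have t₄ : |t' - b| ≤ |a - a'| + 2 * E := by
    have q₁ := abs_sub_le t' a' b
    have q₂ := abs_sub_le a' a b
    rw [abs_sub_comm t' a'] at q₁
    rw [abs_sub_comm a' a] at q₂
    linarith
  linarith

/-- projections to the axis of a loxodromic isometry are controlled by
alignment along `[x₀, g^k x₀]`, with a constant `C` depending only on `δ`, `c`,
and `d(x₀, γ 0)`. -/
theorem stmt5 :
    ∀ (δ c r : ℝ), 0 < δ → 0 ≤ c → 0 ≤ r →
    ∃ C : ℝ, 0 < C ∧
      ∀ (X : Type) [MetricSpace X] [ProperSpace X],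
        GeodesicSpace X → ThinTriangles X δ →
        ∀ (g : X ≃ᵢ X) (τ : ℝ), 0 < τ →
        ∀ (γ : ℝ → X), IsGeodesicOn γ Set.univ →
        ∀ (x₀ : X), dist x₀ (γ 0) = r →
        (∀ (k : ℤ) (t : ℝ), dist ((g ^ k) (γ t)) (γ (t + (k : ℝ) * τ)) ≤ c) →
        ∀ (k : ℕ) (x : X) (S : Set X), IsGeodSegment S x₀ ((g ^ k) x₀) →
          ((∀ K : ℝ, C ≤ K → ¬ AlignedIn K x S x₀ →
              ∀ t : ℝ, γ t ∈ nearestProj (Set.range γ) x → K - C ≤ t) ∧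
           (∀ K : ℝ, 0 ≤ K → K ≤ τ * k - C → AlignedIn K x S x₀ →
              ∀ t : ℝ, γ t ∈ nearestProj (Set.range γ) x → t ≤ K + C)) := by
  intro δ c r hδ hc hr
  -- `R` bounds the distance between corresponding endpoints of `S` and `γ [0, τ k]`, and `D`, `E`
  -- are the fellow-travelling constants for points and for parameters.
  obtain ⟨R, hR⟩ : ∃ R, R = r + c := ⟨_, rfl⟩
  obtain ⟨D, hD⟩ : ∃ D, D = 4 * δ + R := ⟨_, rfl⟩
  obtain ⟨E, hE⟩ : ∃ E, E = 4 * δ + 2 * R := ⟨_, rfl⟩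
  have hR0 : 0 ≤ R := by linarith
  have hD0 : 0 ≤ D := by linarith
  have hE0 : 0 ≤ E := by linarith
  refine ⟨D + 2 * E + 9 * δ + 2, by linarith, ?_⟩
  intro X _ _ hG hT g τ hτ γ hγ x₀ hx₀ hg k x S hS
  obtain ⟨f, L, hL, hf, hf0, hfL, rfl⟩ := hS
  have hk : (0 : ℝ) ≤ τ * k := by positivity
  have i0 : (0 : ℝ) ∈ Set.Icc 0 L := ⟨le_rfl, hL⟩
  have hγ' : IsGeodesicOn γ (Set.Icc 0 (τ * k)) :=
    fun u _ v _ => hγ u (Set.mem_univ u) v (Set.mem_univ v)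
  have e0 : dist (f 0) (γ 0) ≤ R := by rw [hf0, hx₀]; linarith
  have e1 : dist (f L) (γ (τ * k)) ≤ R := by
    have h1 := hg k 0
    rw [zpow_natCast] at h1
    have h2 : dist ((g ^ k) x₀) ((g ^ k) (γ 0)) = r := by
      rw [(g ^ k).dist_eq, hx₀]
    have h3 := dist_triangle ((g ^ k) x₀) ((g ^ k) (γ 0)) (γ (0 + ((k : ℤ) : ℝ) * τ))
    have h4 : 0 + ((k : ℤ) : ℝ) * τ = τ * k := by push_cast; ring
    rw [h4] at h1 h3
    rw [hfL]
    linarith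
  -- The bound on `|t' - b|` holds for any truncation of `t` towards `b`; (i) uses `max t 0`, (ii)
  -- uses `min t (τ * k)`.
  have key : ∀ a ∈ Set.Icc 0 L, f a ∈ nearestProj (f '' Set.Icc 0 L) x →
      ∀ t : ℝ, γ t ∈ nearestProj (Set.range γ) x →
      ∃ b ∈ Set.Icc 0 (τ * k), |a - b| ≤ E ∧ ∀ t' ∈ Set.Icc 0 (τ * k),
        |t - b| = |t - t'| + |t' - b| → |t' - b| ≤ D + E + 9 * δ := by
    intro a ha hpa t ht
    obtain ⟨b, hb, hab, eab⟩ := exists_fellow hδ hG hT hL hk hf hγ' e0 e1 ha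
    rw [← hD] at hab
    rw [← hE] at eab
    refine ⟨b, hb, eab, fun t' ht' hbt => ?_⟩
    obtain ⟨a', ha', hab', eab'⟩ := exists_fellow (R := R) hδ hG hT hk hL hγ' hf
      (by rwa [dist_comm]) (by rwa [dist_comm]) ht'
    rw [← hD, dist_comm] at hab'
    rw [← hE, abs_sub_comm] at eab'
    exact nearest_params_close hδ hG hT hf Set.ordConnected_Icc hγ Set.ordConnected_univ ha ha'
      (Set.mem_univ b) (Set.mem_univ t) (Set.mem_univ t')
      (fun u hu => nearestProj_le hpa (Set.mem_image_of_mem f hu))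
      (fun u _ => nearestProj_le ht (Set.mem_range_self u)) hbt hab hab' eab eab'
  constructor
  · intro K hK hna t ht
    obtain ⟨a, ha, hpa, haK⟩ : ∃ a ∈ Set.Icc 0 L,
        f a ∈ nearestProj (f '' Set.Icc 0 L) x ∧ K - 1 < a := by
      by_contra hcon
      push Not at hcon
      apply hna
      -- The set is contained in `f '' [0, K - 1]`, so its diameter is at most `K - 1`.
      have hsub : ∀ p ∈ nearestProj (f '' Set.Icc 0 L) x ∪ {x₀},
          ∃ u ∈ Set.Icc 0 L, u ≤ K - 1 ∧ f u = p := by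
        rintro p (hp | hp)
        · obtain ⟨u, hu, rfl⟩ := hp.1
          exact ⟨u, hu, hcon u hu hp, rfl⟩
        · exact ⟨0, i0, by linarith, hf0.trans hp.symm⟩
      have : Metric.diam (nearestProj (f '' Set.Icc 0 L) x ∪ {x₀}) ≤ K - 1 := by
        refine Metric.diam_le_of_forall_dist_le (by linarith) ?_
        intro p hp q hq
        obtain ⟨u, hu, hu', rfl⟩ := hsub p hp
        obtain ⟨v, hv, hv', rfl⟩ := hsub q hq
        rw [hf u hu v hv, abs_le]
        constructor <;> linarith [hu.1, hv.1]
      unfold AlignedIn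
      linarith
    obtain ⟨b, hb, eab, H⟩ := key a ha hpa t ht
    have eab' := (abs_le.1 eab).2
    by_cases htb : b ≤ t
    · linarith
    push Not at htb
    have hm := H (max t 0) ⟨le_max_right _ _, max_le (by linarith [hb.2]) hk⟩ (by
      have h1 : max t 0 ≤ b := max_le htb.le hb.1
      have h2 : t ≤ max t 0 := le_max_left _ _
      rw [abs_of_nonpos (by linarith), abs_of_nonpos (by linarith), abs_of_nonpos (by linarith)]
      ring)
    have hm' := (abs_le.1 hm).1
    rcases le_total t 0 with h | h
    · rw [max_eq_right h] at hm'
      linarith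
    · rw [max_eq_left h] at hm'
      linarith
  · intro K hK0 hK hal t ht
    have hcont : ContinuousOn f (Set.Icc 0 L) := by
      refine LipschitzOnWith.continuousOn (K := 1) (LipschitzOnWith.of_dist_le_mul ?_)
      intro u hu v hv
      rw [hf u hu v hv, Real.dist_eq]
      simp
    have hcomp : IsCompact (f '' Set.Icc 0 L) := isCompact_Icc.image_of_continuousOn hcont
    obtain ⟨p, hp, hpd⟩ := hcomp.exists_infDist_eq_dist ⟨f 0, Set.mem_image_of_mem f i0⟩ x
    obtain ⟨a, ha, rfl⟩ := hp
    have hpa : f a ∈ nearestProj (f '' Set.Icc 0 L) x :=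
      ⟨Set.mem_image_of_mem f ha, hpd.symm⟩
    have haK : a < K := by
      have hbdd : Bornology.IsBounded (nearestProj (f '' Set.Icc 0 L) x ∪ {x₀}) :=
        (hcomp.isBounded.subset fun q hq => hq.1).union Bornology.isBounded_singleton
      have h1 := Metric.dist_le_diam_of_mem hbdd (Or.inl hpa) (Or.inr rfl)
      rw [← hf0, hf a ha 0 i0, sub_zero, abs_of_nonneg ha.1, hf0] at h1
      exact h1.trans_lt hal
    obtain ⟨b, hb, eab, H⟩ := key a ha hpa t ht
    have eab' := (abs_le.1 eab).1
    by_cases htb : t ≤ b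
    · linarith
    push Not at htb
    have hm := H (min t (τ * k)) ⟨le_min (by linarith [hb.1]) hk, min_le_right _ _⟩ (by
      have h1 : b ≤ min t (τ * k) := le_min htb.le hb.2
      have h2 : min t (τ * k) ≤ t := min_le_left _ _
      rw [abs_of_nonneg (by linarith), abs_of_nonneg (by linarith), abs_of_nonneg (by linarith)]
      ring)
    have hm' := (abs_le.1 hm).2
    rcases le_total t (τ * k) with h | h
    · rw [min_eq_left h] at hm'
      linarith
    · rw [min_eq_right h] at hm'
      linarith
end

section
/- Let R > 0 and x, y, z ∈ X. If O_R(x,y) ∩ O_R(y,z) ≠ ∅, then d(x,z) ≥ d(x,y) + d(y,z) − 4R. -/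
/-!
A point `w` of the shadow `O_R(x,y)` satisfies `d(x,y) + d(y,w) ≤ d(x,w) + 2R`
(`dist_add_dist_le_of_mem_shadow`), because a geodesic from `x` to `w` passes within `R` of `y`.
For `w` in both shadows, adding this estimate for `(x,y,w)` and `(y,z,w)` gives
`d(x,y) + d(y,z) + d(z,w) ≤ d(x,w) + 4R`, and `d(x,w) ≤ d(x,z) + d(z,w)`.
-/

open Metric Set

/-- If `w` lies in the shadow `O_R(x,y)`, then `y` is within `R` of a point `p` with
`d(x,p) + d(p,w) = d(x,w)`, so passing through `y` costs at most `2R`. -/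
theorem dist_add_dist_le_of_mem_shadow {X : Type*} [MetricSpace X] {R : ℝ} {x y w : X}
    (h : w ∈ Shadow R x y) : dist x y + dist y w ≤ dist x w + 2 * R := by
  obtain ⟨S, ⟨f, L, hL, hf, rfl, rfl, rfl⟩, p, ⟨t, ht, rfl⟩, hp⟩ := h
  have h0 : (0 : ℝ) ∈ Icc 0 L := ⟨le_rfl, hL⟩
  have h1 : L ∈ Icc 0 L := ⟨hL, le_rfl⟩
  have e1 := hf 0 h0 t ht
  have e2 := hf t ht L h1
  have e3 := hf 0 h0 L h1
  rw [abs_sub_comm, abs_of_nonneg (by linarith [ht.1])] at e1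
  rw [abs_sub_comm, abs_of_nonneg (by linarith [ht.2])] at e2
  rw [abs_sub_comm, abs_of_nonneg (by linarith)] at e3
  have t1 := dist_triangle (f 0) (f t) y
  have t2 := dist_triangle y (f t) (f L)
  rw [dist_comm y (f t)] at t2
  linarith

/-- nonempty intersection of consecutive shadows gives a reverse
triangle inequality. -/
theorem stmt7 {X : Type*} [MetricSpace X] [ProperSpace X]
    (hX : GeodesicSpace X)
    (R : ℝ) (hR : 0 < R) (x y z : X)
    (h : (Shadow R x y ∩ Shadow R y z).Nonempty) :
    dist x z ≥ dist x y + dist y z - 4 * R := by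
  obtain ⟨w, hxy, hyz⟩ := h
  -- Chain the two shadow estimates at `w`; the terms in `d(y,w)` cancel.
  have h1 := dist_add_dist_le_of_mem_shadow hxy
  have h2 := dist_add_dist_le_of_mem_shadow hyz
  have h3 := dist_triangle x z w
  linarith
end

section
/- Let V be a real normed vector space, T : V → V a nonzero continuous linear map with operator norm ‖T‖, and 0 < ε ≤ 1. If v, w ∈ V satisfy ‖v‖ = ‖w‖ = 1, ‖Tv‖ ≥ ε‖T‖, and ‖Tw‖ ≥ ε‖T‖, then |log ‖Tv‖ − log ‖Tw‖| ≤ (1/ε)·‖v − w‖. -/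
/-- One-sided form of the estimate: `log a - log b ≤ a / b - 1 = (a - b) / b` with `a = ‖T v‖`,
`b = ‖T w‖`, where `a - b ≤ ‖T‖ * ‖v - w‖` and `b ≥ ε * ‖T‖`. -/
lemma log_norm_sub_log_norm_le {V : Type*} [NormedAddCommGroup V] [NormedSpace ℝ V]
    (T : V →L[ℝ] V) (hT : 0 < ‖T‖) (ε : ℝ) (hε0 : 0 < ε) (v w : V)
    (hTv : ε * ‖T‖ ≤ ‖T v‖) (hTw : ε * ‖T‖ ≤ ‖T w‖) :
    Real.log ‖T v‖ - Real.log ‖T w‖ ≤ (1 / ε) * ‖v - w‖ := by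
  have hpos : 0 < ε * ‖T‖ := mul_pos hε0 hT
  have ha : 0 < ‖T v‖ := hpos.trans_le hTv
  have hb : 0 < ‖T w‖ := hpos.trans_le hTw
  have hsub : ‖T v‖ - ‖T w‖ ≤ ‖T‖ * ‖v - w‖ := by
    refine (norm_sub_norm_le _ _).trans ?_
    rw [← map_sub]
    exact T.le_opNorm _
  calc Real.log ‖T v‖ - Real.log ‖T w‖ = Real.log (‖T v‖ / ‖T w‖) :=
        (Real.log_div ha.ne' hb.ne').symm
    _ ≤ ‖T v‖ / ‖T w‖ - 1 := Real.log_le_sub_one_of_pos (div_pos ha hb)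
    _ = (‖T v‖ - ‖T w‖) / ‖T w‖ := by field_simp
    _ ≤ (‖T‖ * ‖v - w‖) / ‖T w‖ := by gcongr
    _ ≤ (‖T‖ * ‖v - w‖) / (ε * ‖T‖) := by gcongr
    _ = (1 / ε) * ‖v - w‖ := by field_simp

/-- log-Lipschitz estimate for the operator norm on unit vectors
that are `ε`-generic for `T`. -/
theorem stmt9 {V : Type*} [NormedAddCommGroup V] [NormedSpace ℝ V]
    (T : V →L[ℝ] V) (hT : T ≠ 0)
    (ε : ℝ) (hε0 : 0 < ε) (hε1 : ε ≤ 1)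
    (v w : V) (hv : ‖v‖ = 1) (hw : ‖w‖ = 1)
    (hTv : ε * ‖T‖ ≤ ‖T v‖) (hTw : ε * ‖T‖ ≤ ‖T w‖) :
    |Real.log ‖T v‖ - Real.log ‖T w‖| ≤ (1 / ε) * ‖v - w‖ := by
  have hT' : 0 < ‖T‖ := norm_pos_iff.mpr hT
  refine abs_sub_le_iff.mpr ⟨log_norm_sub_log_norm_le T hT' ε hε0 v w hTv hTw, ?_⟩
  rw [norm_sub_rev v w]
  exact log_norm_sub_log_norm_le T hT' ε hε0 w v hTw hTv
end
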